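/- Fix c̄ ∈ (0, c_crit). Set A := 2√2·m and B := c̄²·√m·min{1, (1 - 1/(3√2))/(8m^{3/2})}. Then A > 0, B > 0, and for every c with c̄ ≤ c < c_crit, every s ∈ [0, 1/(3√2)], and every h ∈ [-1, 0]: F_c(s, h) ≤ -B·((1-h²)² - h³)/(A·s + δ), where δ := √(e·m·(c_crit² - c²)). -/

import Mathlib

/-- The function `φ(r) = e^{r/(2m)-1}(r - 2m)` defining the Kruskal radius implicitly. -/
noncomputable def phi (m r : ℝ) : ℝ := Real.exp (r / (2*m) - 1) * (r - 2*m)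

/-- The derivative `φ_r(r) = (r/(2m)) e^{r/(2m)-1}`. -/
noncomputable def phiR (m r : ℝ) : ℝ := (r / (2*m)) * Real.exp (r / (2*m) - 1)

/-- The critical parameter `c_crit = √(8m/e)`. -/
noncomputable def cCrit (m : ℝ) : ℝ := Real.sqrt (8*m / Real.exp 1)

/-- The right-hand side of Jang's equation on the slice `L_c`:
`f''(u) = jangRHS m c u r (f'(u))` where `r = r(u)` solves `φ(r) = u(u+c)`. -/
noncomputable def jangRHS (m c u r p : ℝ) : ℝ :=
  c * Real.sqrt (2*m / phiR m r + p^2/4) *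
      ((1 / phiR m r) * (1/(2*m) - 3/r) - p^2/(2*m*r))
    - ((2*u + c)/(4*m*r)) * p^3
    - ((2*u + c)/(2 * phiR m r)) * (1/(2*m) + 5/r) * p

/-- The right-hand side `F_c(s,h)` of the transformed Jang equation,
with `r = r_c(s)` solving `φ(r) = (c²/4)(s²-1)`. -/
noncomputable def Fc (m c s r h : ℝ) : ℝ :=
  (c^2/2) * Real.sqrt (2*m*(1 - h^2) / phiR m r + h^2/4) *
      (((1 - h^2) / phiR m r) * (1/(2*m) - 3/r) - h^2/(2*m*r))
    - (c^2*s/(8*m*r)) * h^3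
    - (c^2*s/(4 * phiR m r)) * (1/(2*m) + 5/r) * (h*(1 - h^2))

/-!
With `y = r / (2m)`, the inequality `(1 - y) e^y ≤ 1 - y² / 2` says that `φ` grows at least
quadratically from its value `-2m / e` at `0`. Since `φ(r) = c² (s² - 1) / 4` and `c ≤ c_crit`,
this gives `r² ≤ (A s)² + δ²` and hence `r ≤ A s + δ`, so it is enough to bound `-r F_c / c²` from
below.

If `S` denotes the square root in `F_c`, then
`-r F_c / c² = (1 - h²) / φ_r · (S (3 - y) / 2 + s (y + 5) h / 4) + h² (2 S + s h) / (8m)`.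
The bound `S ≥ √m (1 - h²) - √2 h / 4` makes the first bracket at least `√m (1 - h²)`, and
`S ≥ -h / 2` makes the second summand at least `-(1 - s) h³ / (8m)`.
-/

section

open Real

variable {m c s r h : ℝ}

theorem one_sub_mul_exp_le {y : ℝ} (hy : 0 ≤ y) : (1 - y) * exp y ≤ 1 - y ^ 2 / 2 := by
  have hderiv : ∀ x : ℝ,
      HasDerivAt (fun x ↦ 1 - x ^ 2 / 2 - (1 - x) * exp x) (x * (exp x - 1)) x := fun x ↦ by
    have h := (((hasDerivAt_pow 2 x).div_const 2).const_sub 1).sub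
      (((hasDerivAt_id x).const_sub 1).mul (hasDerivAt_exp x))
    exact h.congr_deriv (by simp only [id]; push_cast; ring)
  have hmono : Monotone fun x : ℝ ↦ 1 - x ^ 2 / 2 - (1 - x) * exp x := by
    refine monotone_of_deriv_nonneg (fun x ↦ (hderiv x).differentiableAt) fun x ↦ ?_
    rw [(hderiv x).deriv]
    rcases le_total 0 x with hx | hx
    · exact mul_nonneg hx (sub_nonneg.2 (one_le_exp hx))
    · exact mul_nonneg_of_nonpos_of_nonpos hx (sub_nonpos.2 (exp_le_one_iff.2 hx))
  simpa using hmono hy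

theorem sqrt_mul_min_one_div_rpow (hm : 0 < m) (a : ℝ) :
    √m * min 1 (a / (8 * m ^ ((3 : ℝ) / 2))) = min √m (a / (8 * m)) := by
  have hpow : m ^ ((3 : ℝ) / 2) = m * √m := by
    rw [sqrt_eq_rpow, ← rpow_one_add' hm.le (by norm_num)]
    norm_num
  rw [mul_min_of_nonneg _ _ (sqrt_nonneg m), mul_one, hpow]
  congr 1
  field_simp

theorem one_div_three_mul_sqrt_two_lt_one : 1 / (3 * √2) < 1 :=
  (div_lt_one (by positivity)).2 (by linarith [one_lt_sqrt_two])

theorem phi_nonpos_iff : phi m r ≤ 0 ↔ r ≤ 2 * m := by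
  rw [phi, ← not_lt, mul_pos_iff_of_pos_left (exp_pos _), sub_pos, not_lt]

theorem phiR_pos (hm : 0 < m) (hr : 0 < r) : 0 < phiR m r := by
  unfold phiR
  positivity

theorem phiR_le_one (hm : 0 < m) (hr : r ≤ 2 * m) : phiR m r ≤ 1 := by
  have hy : r / (2 * m) ≤ 1 := (div_le_one (by positivity)).2 hr
  exact mul_le_one₀ hy (exp_pos _).le (exp_le_one_iff.2 (sub_nonpos.2 hy))

theorem cCrit_sq (hm : 0 ≤ m) : cCrit m ^ 2 = 8 * m / exp 1 :=
  sq_sqrt (by positivity)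

theorem sq_le_cCrit_sq_add_phi (hm : 0 < m) (hr : 0 ≤ r) :
    r ^ 2 ≤ exp 1 * m * (cCrit m ^ 2 + 4 * phi m r) := by
  have hbound := one_sub_mul_exp_le (y := r / (2 * m)) (by positivity)
  calc r ^ 2 = 8 * m ^ 2 * (1 - (1 - (r / (2 * m)) ^ 2 / 2)) := by field_simp; ring
    _ ≤ 8 * m ^ 2 * (1 - (1 - r / (2 * m)) * exp (r / (2 * m))) := by gcongr
    _ = exp 1 * m * (cCrit m ^ 2 + 4 * phi m r) := by
      rw [cCrit_sq hm.le, phi, exp_sub]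
      field_simp
      ring

theorem radius_le (hm : 0 < m) (hc : c ^ 2 ≤ cCrit m ^ 2) (hs : 0 ≤ s) (hr : 0 ≤ r)
    (hphi : phi m r = c ^ 2 / 4 * (s ^ 2 - 1)) :
    r ≤ 2 * √2 * m * s + √(exp 1 * m * (cCrit m ^ 2 - c ^ 2)) := by
  have hδ : √(exp 1 * m * (cCrit m ^ 2 - c ^ 2)) ^ 2 = exp 1 * m * (cCrit m ^ 2 - c ^ 2) :=
    sq_sqrt (mul_nonneg (by positivity) (sub_nonneg.2 hc))
  have hA : exp 1 * m * cCrit m ^ 2 * s ^ 2 = (2 * √2 * m * s) ^ 2 := by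
    rw [cCrit_sq hm.le, mul_pow, mul_pow, mul_pow, sq_sqrt zero_le_two]
    field_simp
    ring
  refine le_of_sq_le_sq ?_ (by positivity)
  calc r ^ 2 ≤ exp 1 * m * (cCrit m ^ 2 + 4 * phi m r) := sq_le_cCrit_sq_add_phi hm hr
    _ = exp 1 * m * c ^ 2 * s ^ 2 + exp 1 * m * (cCrit m ^ 2 - c ^ 2) := by rw [hphi]; ring
    _ ≤ exp 1 * m * cCrit m ^ 2 * s ^ 2 + exp 1 * m * (cCrit m ^ 2 - c ^ 2) := by gcongr
    _ = (2 * √2 * m * s) ^ 2 + √(exp 1 * m * (cCrit m ^ 2 - c ^ 2)) ^ 2 := by rw [hA, hδ]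
    _ ≤ _ := pow_add_pow_le (by positivity) (by positivity) two_ne_zero

theorem Fc_eq (hm : m ≠ 0) (hr : r ≠ 0) :
    Fc m c s r h = -(c ^ 2 / r) *
      ((1 - h ^ 2) / phiR m r *
          (√(2 * m * (1 - h ^ 2) / phiR m r + h ^ 2 / 4) * (3 - r / (2 * m)) / 2 +
            s * (r / (2 * m) + 5) * h / 4) +
        h ^ 2 * (2 * √(2 * m * (1 - h ^ 2) / phiR m r + h ^ 2 / 4) + s * h) / (8 * m)) := by
  unfold Fc
  field_simp
  ring

theorem sqrt_mul_sub_le_sqrt {q D : ℝ} (hm : 0 ≤ m) (hq₀ : 0 ≤ q) (hq₁ : q ≤ 1) (hD₀ : 0 < D)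
    (hD₁ : D ≤ 1) : √m * q - √2 / 4 * h ≤ √(2 * m * q / D + h ^ 2 / 4) := by
  apply le_sqrt_of_sq_le
  calc (√m * q - √2 / 4 * h) ^ 2 ≤ 2 * ((√m * q) ^ 2 + (√2 / 4 * h) ^ 2) := by
        linarith [sq_nonneg (√m * q + √2 / 4 * h)]
    _ = 2 * m * q * q + h ^ 2 / 4 := by
      rw [mul_pow, mul_pow, div_pow, sq_sqrt hm, sq_sqrt zero_le_two]
      ring
    _ ≤ 2 * m * q / D + h ^ 2 / 4 := by
      gcongr
      calc 2 * m * q * q ≤ 2 * m * q := mul_le_of_le_one_right (by positivity) hq₁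
        _ ≤ 2 * m * q / D := le_div_self (by positivity) hD₀ hD₁

/-- This is where the range of `s` comes from: for `y = 1` and `s = 1 / (3√2)` the terms in `√2 * h`
cancel exactly. -/
theorem le_mul_three_sub_add_mul_add_five {a S y : ℝ} (ha : 0 ≤ a) (hS : a - √2 / 4 * h ≤ S)
    (hh : h ≤ 0) (hs : s ≤ 1 / (3 * √2)) (hy₀ : -5 ≤ y) (hy₁ : y ≤ 1) :
    a ≤ S * (3 - y) / 2 + s * (y + 5) * h / 4 := by
  have hs' : s ≤ √2 / 6 := hs.trans_eq (by field_simp; norm_num)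
  have hsy : √2 / 6 * (y + 5) * h ≤ s * (y + 5) * h :=
    mul_le_mul_of_nonpos_right (mul_le_mul_of_nonneg_right hs' (by linarith)) hh
  have hSy : (a - √2 / 4 * h) * (3 - y) ≤ S * (3 - y) :=
    mul_le_mul_of_nonneg_right hS (by linarith)
  have hrest : 0 ≤ (a - √2 / 3 * h) * (1 - y) :=
    mul_nonneg (sub_nonneg.2 ((mul_nonpos_of_nonneg_of_nonpos (by positivity) hh).trans ha))
      (sub_nonneg.2 hy₁)
  linarith

theorem Fc_le (hm : 0 < m) (hs : s ≤ 1 / (3 * √2)) (hh₀ : -1 ≤ h) (hh₁ : h ≤ 0) (hr₀ : 0 < r)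
    (hr₁ : r ≤ 2 * m) :
    Fc m c s r h ≤ -(c ^ 2 / r) * (√m * (1 - h ^ 2) ^ 2 - (1 - s) / (8 * m) * h ^ 3) := by
  have hD := phiR_pos hm hr₀
  have hD₁ := phiR_le_one hm hr₁
  have hq : 0 ≤ 1 - h ^ 2 := by nlinarith
  have hq₁ : 1 - h ^ 2 ≤ 1 := sub_le_self _ (sq_nonneg h)
  rw [Fc_eq hm.ne' hr₀.ne']
  set S := √(2 * m * (1 - h ^ 2) / phiR m r + h ^ 2 / 4)
  have hS : √m * (1 - h ^ 2) - √2 / 4 * h ≤ S := sqrt_mul_sub_le_sqrt hm.le hq hq₁ hD hD₁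
  have hfrac : 0 ≤ 2 * m * (1 - h ^ 2) / phiR m r := by positivity
  have hS' : -h / 2 ≤ S := le_sqrt_of_sq_le (by linarith)
  have hregular : √m * (1 - h ^ 2) ≤
      S * (3 - r / (2 * m)) / 2 + s * (r / (2 * m) + 5) * h / 4 :=
    le_mul_three_sub_add_mul_add_five (by positivity) hS hh₁ hs
      (by linarith [div_pos hr₀ (mul_pos two_pos hm)]) ((div_le_one (by positivity)).2 hr₁)
  apply mul_le_mul_of_nonpos_left _ (neg_nonpos.2 (by positivity))
  calc √m * (1 - h ^ 2) ^ 2 - (1 - s) / (8 * m) * h ^ 3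
      = (1 - h ^ 2) * (√m * (1 - h ^ 2)) + h ^ 2 * (2 * (-h / 2) + s * h) / (8 * m) := by ring
    _ ≤ _ := by
      gcongr
      exact le_div_self hq hD hD₁

theorem Fc_le_min (hm : 0 < m) (hs : s ≤ 1 / (3 * √2)) (hh₀ : -1 ≤ h) (hh₁ : h ≤ 0) (hr₀ : 0 < r)
    (hr₁ : r ≤ 2 * m) :
    Fc m c s r h ≤ -(c ^ 2 / r) *
      (min √m ((1 - 1 / (3 * √2)) / (8 * m)) * ((1 - h ^ 2) ^ 2 - h ^ 3)) := by
  refine (Fc_le hm hs hh₀ hh₁ hr₀ hr₁).trans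
    (mul_le_mul_of_nonpos_left ?_ (neg_nonpos.2 (by positivity)))
  have hs' : (1 - 1 / (3 * √2)) / (8 * m) ≤ (1 - s) / (8 * m) := by gcongr
  rw [mul_sub]
  exact sub_le_sub (mul_le_mul_of_nonneg_right (min_le_left _ _) (sq_nonneg _))
    (mul_le_mul_of_nonpos_right ((min_le_right _ _).trans hs') (Odd.pow_nonpos (by decide) hh₁))

end

/-- With `A = 2√2 m` and `B = c̄²√m · min{1, (1 - 1/(3√2))/(8m^{3/2})}`,
one has `A, B > 0` and, for every `c ∈ [c̄, c_crit)`, `s ∈ [0, 1/(3√2)]`, `h ∈ [-1,0]`: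
`F_c(s,h) ≤ -B((1-h²)² - h³)/(As + δ)` where `δ = √(em(c_crit² - c²))`. -/
theorem F_key_estimate (m cbar : ℝ) (hm : 0 < m) (hcbar : cbar ∈ Set.Ioo 0 (cCrit m)) :
    0 < 2 * Real.sqrt 2 * m ∧
    0 < cbar^2 * Real.sqrt m * min 1 ((1 - 1/(3*Real.sqrt 2)) / (8 * m^((3:ℝ)/2))) ∧
    ∀ c, cbar ≤ c → c < cCrit m →
      ∀ s ∈ Set.Icc (0:ℝ) (1/(3*Real.sqrt 2)), ∀ x ∈ Set.Icc (-1:ℝ) 0,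
        ∀ r, 0 < r → phi m r = c^2/4 * (s^2 - 1) →
          Fc m c s r x ≤
            -(cbar^2 * Real.sqrt m * min 1 ((1 - 1/(3*Real.sqrt 2)) / (8 * m^((3:ℝ)/2)))) *
                ((1 - x^2)^2 - x^3) /
              (2 * Real.sqrt 2 * m * s +
                Real.sqrt (Real.exp 1 * m * ((cCrit m)^2 - c^2))) := by
  have hσ := one_div_three_mul_sqrt_two_lt_one
  have hκ : 0 < min √m ((1 - 1 / (3 * √2)) / (8 * m)) :=
    lt_min (Real.sqrt_pos.2 hm) (div_pos (sub_pos.2 hσ) (by positivity))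
  have hcbar₀ := hcbar.1
  rw [mul_assoc (cbar ^ 2), sqrt_mul_min_one_div_rpow hm]
  refine ⟨by positivity, mul_pos (pow_pos hcbar₀ 2) hκ, ?_⟩
  rintro c hcbarc hc s ⟨hs₀, hs⟩ h ⟨hh₀, hh₁⟩ r hr hphi
  have hc₀ : 0 < c := hcbar₀.trans_le hcbarc
  have hr2m : r ≤ 2 * m := by
    rw [← phi_nonpos_iff, hphi]
    exact mul_nonpos_of_nonneg_of_nonpos (by positivity)
      (sub_nonpos.2 (pow_le_one₀ hs₀ (hs.trans hσ.le)))
  have hrle := radius_le hm (by gcongr) hs₀ hr.le hphi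
  have hN : 0 ≤ (1 - h ^ 2) ^ 2 - h ^ 3 :=
    sub_nonneg.2 ((Odd.pow_nonpos (by decide) hh₁).trans (sq_nonneg _))
  refine (Fc_le_min hm hs hh₀ hh₁ hr hr2m).trans ?_
  rw [neg_mul, neg_mul, neg_div, neg_le_neg_iff, div_mul_eq_mul_div, mul_assoc (cbar ^ 2)]
  exact div_le_div₀ (by positivity) (by gcongr) hr hrle
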